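/- arXiv:0709.4403 — 9 statements merged into one kernel-verified Lean document; each statement's English description precedes it below -/
import Mathlib

section
/- For all 3×3 complex matrices X, W₁, W₂ and W₃, one has the trace identity tr(W₁·X·W₂·X·W₃) = −tr(W₁·X²·W₂·W₃) − tr(W₁·W₂·X²·W₃) + tr(W₁·pol(X, W₂)·W₃). -/
open Matrix

/-- The polarization `pol(X,Y)` of the Cayley–Hamilton polynomial for `3×3` complex matrices. -/
noncomputable def pol (X Y : Matrix (Fin 3) (Fin 3) ℂ) : Matrix (Fin 3) (Fin 3) ℂ :=
  (trace X) • (Y * X + X * Y) + (trace (X * Y) - trace X * trace Y) • X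
    + ((trace (X * X) - (trace X) ^ 2) / 2) • Y
    + (trace (Y * X * X) - trace X * trace (X * Y)
        + trace Y * (((trace X) ^ 2 - trace (X * X)) / 2)) • (1 : Matrix (Fin 3) (Fin 3) ℂ)
    + (trace Y) • (X * X)

set_option maxHeartbeats 4000000 in
theorem pol_eq_aux (X Y : Matrix (Fin 3) (Fin 3) ℂ) :
    pol X Y = X * Y * X + X * X * Y + Y * (X * X) := by
  ext i j
  fin_cases i <;> fin_cases j <;>
    simp [pol, Matrix.mul_apply, Fin.sum_univ_three, Matrix.trace, Matrix.one_apply] <;> ring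

/-- Trace identity eliminating a repeated letter in a word. -/
theorem trace_repeated_letter_reduction (X W₁ W₂ W₃ : Matrix (Fin 3) (Fin 3) ℂ) :
    trace (W₁ * X * W₂ * X * W₃)
      = -trace (W₁ * (X * X) * W₂ * W₃) - trace (W₁ * W₂ * (X * X) * W₃)
        + trace (W₁ * pol X W₂ * W₃) := by
  rw [pol_eq_aux]
  simp only [Matrix.mul_add, Matrix.add_mul, Matrix.trace_add, Matrix.mul_assoc]
  ring
end

section
/- For all 3×3 complex matrices X, W₁ and W₂, one has the trace identity tr(W₁·X·W₂·X²) = −tr(W₂·X·W₁·X²) − tr(W₁·W₂·X³) + tr(W₁·pol(X, W₂)·X). -/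
open Matrix

lemma pol_eq_sum (X Y : Matrix (Fin 3) (Fin 3) ℂ) :
    pol X Y = X * X * Y + X * Y * X + Y * X * X := by
  ext i j
  fin_cases i <;> fin_cases j <;>
    simp [pol, Matrix.trace, Matrix.mul_apply, Fin.sum_univ_three] <;> ring

/-- Trace identity relating  and . -/
theorem trace_swap_reduction (X W₁ W₂ : Matrix (Fin 3) (Fin 3) ℂ) :
    trace (W₁ * X * W₂ * (X * X))
      = -trace (W₂ * X * W₁ * (X * X)) - trace (W₁ * W₂ * (X * X * X))
        + trace (W₁ * pol X W₂ * X) := by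
  have h : trace (W₂ * X * W₁ * (X * X)) = trace (W₁ * (X * X) * (W₂ * X)) := by
    rw [Matrix.mul_assoc (W₂ * X), Matrix.trace_mul_comm]
  rw [pol_eq_sum, h]
  simp only [Matrix.mul_add, Matrix.add_mul, Matrix.trace_add, Matrix.mul_assoc]
  ring
end

section
/- For all matrices A and B in SL(3,ℂ), the following trace identity holds: tr(B·A·B⁻¹·A⁻¹) = −tr(A·B·A⁻¹·B⁻¹) + tr(A)tr(A⁻¹)tr(B)tr(B⁻¹) + tr(A)tr(A⁻¹) + tr(B)tr(B⁻¹) + tr(AB)tr(A⁻¹B⁻¹) + tr(AB⁻¹)tr(A⁻¹B) − tr(A⁻¹)tr(B)tr(AB⁻¹) − tr(A)tr(B⁻¹)tr(A⁻¹B) − tr(A)tr(B)tr(A⁻¹B⁻¹) − tr(AB)tr(A⁻¹)tr(B⁻¹) − 3. -/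
open Matrix

/-- The fundamental trace identity for four 3×3 matrices. -/
theorem fundamental_trace_identity (X Y Z W : Matrix (Fin 3) (Fin 3) ℂ) :
    trace (X * Y * Z * W) + trace (X * Y * W * Z) + trace (X * Z * Y * W)
      + trace (X * Z * W * Y) + trace (X * W * Y * Z) + trace (X * W * Z * Y)
    = (trace (X * Y * Z) + trace (X * Z * Y)) * trace W
      + (trace (X * Y * W) + trace (X * W * Y)) * trace Z
      + (trace (X * Z * W) + trace (X * W * Z)) * trace Y
      + (trace (Y * Z * W) + trace (Y * W * Z)) * trace X
      + trace (X * Y) * trace (Z * W) + trace (X * Z) * trace (Y * W)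
      + trace (X * W) * trace (Y * Z)
      - trace (X * Y) * trace Z * trace W - trace (X * Z) * trace Y * trace W
      - trace (X * W) * trace Y * trace Z - trace (Y * Z) * trace X * trace W
      - trace (Y * W) * trace X * trace Z - trace (Z * W) * trace X * trace Y
      + trace X * trace Y * trace Z * trace W := by
  simp only [trace_fin_three, mul_apply, Fin.sum_univ_three]
  ring

/-- The commutator trace identity in `SL(3,ℂ)` relating `tr(BAB⁻¹A⁻¹)` and `tr(ABA⁻¹B⁻¹)`. -/
theorem sl3_commutator_trace_identity (A B : Matrix (Fin 3) (Fin 3) ℂ)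
    (hA : A.det = 1) (hB : B.det = 1) :
    trace (B * A * B⁻¹ * A⁻¹)
      = -trace (A * B * A⁻¹ * B⁻¹)
        + trace A * trace A⁻¹ * trace B * trace B⁻¹
        + trace A * trace A⁻¹
        + trace B * trace B⁻¹
        + trace (A * B) * trace (A⁻¹ * B⁻¹)
        + trace (A * B⁻¹) * trace (A⁻¹ * B)
        - trace A⁻¹ * trace B * trace (A * B⁻¹)
        - trace A * trace B⁻¹ * trace (A⁻¹ * B)
        - trace A * trace B * trace (A⁻¹ * B⁻¹)
        - trace (A * B) * trace A⁻¹ * trace B⁻¹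
        - 3 := by
  have a1 : A * A⁻¹ = 1 := mul_nonsing_inv A (by simp [hA])
  have a2 : A⁻¹ * A = 1 := nonsing_inv_mul A (by simp [hA])
  have b1 : B * B⁻¹ = 1 := mul_nonsing_inv B (by simp [hB])
  have b2 : B⁻¹ * B = 1 := nonsing_inv_mul B (by simp [hB])
  have h := fundamental_trace_identity A B A⁻¹ B⁻¹
  generalize A⁻¹ = C at *
  generalize B⁻¹ = D at *
  have t3 : trace (1 : Matrix (Fin 3) (Fin 3) ℂ) = 3 := by simp
  have e1 : trace (A * B * D * C) = 3 := by rw [mul_assoc A B D, b1, mul_one, a1, t3]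
  have e2 : trace (A * C * B * D) = 3 := by rw [a1, one_mul, b1, t3]
  have e3 : trace (A * C * D * B) = 3 := by rw [a1, one_mul, b2, t3]
  have e4 : trace (A * D * B * C) = 3 := by rw [mul_assoc A D B, b2, mul_one, a1, t3]
  have e5 : trace (A * D * C * B) = trace (B * A * D * C) := by
    rw [trace_mul_comm, mul_assoc B A D, mul_assoc B (A * D) C]
  have f1 : trace (A * B * C) = trace B := by rw [trace_mul_comm, ← mul_assoc, a2, one_mul]
  have f2 : trace (A * C * B) = trace B := by rw [a1, one_mul]
  have f3 : trace (A * B * D) = trace A := by rw [mul_assoc, b1, mul_one]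
  have f4 : trace (A * D * B) = trace A := by rw [mul_assoc, b2, mul_one]
  have f5 : trace (A * C * D) = trace D := by rw [a1, one_mul]
  have f6 : trace (A * D * C) = trace D := by rw [trace_mul_comm, ← mul_assoc, a2, one_mul]
  have f7 : trace (B * C * D) = trace C := by rw [trace_mul_comm, ← mul_assoc, b2, one_mul]
  have f8 : trace (B * D * C) = trace C := by rw [b1, one_mul]
  rw [e1, e2, e3, e4, e5, f1, f2, f3, f4, f5, f6, f7, f8, a1, b1, t3, trace_mul_comm B C] at h
  linear_combination h
end

section
/- For all 3×3 complex matrices X₁, X₂, X₃, X₄, X₅ the following trace identity holds: 3t(1,2,3,4,5) + 3t(1,2,3,5,4) + 3t(2,1,3,4,5) + 3t(2,1,3,5,4) = 3t(1)t(2)t(5)t(3,4) − 3t(5)t(1,2)t(3,4) − 3t(2)t(1,5)t(3,4) − 3t(1)t(2,5)t(3,4) − 3t(2)t(5)t(1,3,4) + 3t(2,5)t(1,3,4) − 3t(1)t(5)t(2,3,4) + 3t(1,5)t(2,3,4) − 4t(1,2)t(3,4,5) + 3t(3,4)t(5,1,2) + 3t(3,4)t(5,2,1) − 3t(1)t(2)t(5,3,4)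 + 7t(1,2)t(5,3,4) + 3t(5)t(1,2,3,4) − 2t(2)t(1,3,4,5) + 3t(2)t(1,5,3,4) + 3t(5)t(2,1,3,4) − 2t(1)t(2,3,4,5) + 3t(1)t(2,5,3,4) + 5t(2)t(5,1,3,4) + 5t(1)t(5,2,3,4) − 3t(1,2,3,4,5) + 3t(1,2,3,5,4) − 3t(1,2,5,3,4) − 3t(1,5,2,3,4) − 3t(2,1,3,4,5) + 3t(2,1,3,5,4) − 3t(2,1,5,3,4) − 3t(2,5,1,3,4) + 3t(5,1,2,3,4) + 3t(5,2,1,3,4). -/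
open Matrix

lemma polarized_cayley_hamilton (A B C : Matrix (Fin 3) (Fin 3) ℂ) :
    A*B*C + A*C*B + B*A*C + B*C*A + C*A*B + C*B*A
      - trace A • (B*C + C*B) - trace B • (A*C + C*A) - trace C • (A*B + B*A)
      + (trace A * trace B - trace (A*B)) • C
      + (trace A * trace C - trace (A*C)) • B
      + (trace B * trace C - trace (B*C)) • A
      - (trace A * trace B * trace C - trace A * trace (B*C) - trace B * trace (A*C)
          - trace C * trace (A*B) + trace (A*B*C) + trace (A*C*B)) • (1 : Matrix (Fin 3) (Fin 3) ℂ)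
      = 0 := by
  ext i j
  fin_cases i <;> fin_cases j <;>
    simp [Matrix.mul_apply, Matrix.trace, Fin.sum_univ_three, Matrix.one_apply] <;> ring

/-- A fundamental trace identity among five generic 3×3 matrices. -/
theorem five_letter_trace_identity (X₁ X₂ X₃ X₄ X₅ : Matrix (Fin 3) (Fin 3) ℂ) :
    3 * trace (X₁*X₂*X₃*X₄*X₅) + 3 * trace (X₁*X₂*X₃*X₅*X₄)
      + 3 * trace (X₂*X₁*X₃*X₄*X₅) + 3 * trace (X₂*X₁*X₃*X₅*X₄)
    =
      3 * trace X₁ * trace X₂ * trace X₅ * trace (X₃*X₄)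
      - 3 * trace X₅ * trace (X₁*X₂) * trace (X₃*X₄)
      - 3 * trace X₂ * trace (X₁*X₅) * trace (X₃*X₄)
      - 3 * trace X₁ * trace (X₂*X₅) * trace (X₃*X₄)
      - 3 * trace X₂ * trace X₅ * trace (X₁*X₃*X₄)
      + 3 * trace (X₂*X₅) * trace (X₁*X₃*X₄)
      - 3 * trace X₁ * trace X₅ * trace (X₂*X₃*X₄)
      + 3 * trace (X₁*X₅) * trace (X₂*X₃*X₄)
      - 4 * trace (X₁*X₂) * trace (X₃*X₄*X₅)
      + 3 * trace (X₃*X₄) * trace (X₅*X₁*X₂)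
      + 3 * trace (X₃*X₄) * trace (X₅*X₂*X₁)
      - 3 * trace X₁ * trace X₂ * trace (X₅*X₃*X₄)
      + 7 * trace (X₁*X₂) * trace (X₅*X₃*X₄)
      + 3 * trace X₅ * trace (X₁*X₂*X₃*X₄)
      - 2 * trace X₂ * trace (X₁*X₃*X₄*X₅)
      + 3 * trace X₂ * trace (X₁*X₅*X₃*X₄)
      + 3 * trace X₅ * trace (X₂*X₁*X₃*X₄)
      - 2 * trace X₁ * trace (X₂*X₃*X₄*X₅)
      + 3 * trace X₁ * trace (X₂*X₅*X₃*X₄)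
      + 5 * trace X₂ * trace (X₅*X₁*X₃*X₄)
      + 5 * trace X₁ * trace (X₅*X₂*X₃*X₄)
      - 3 * trace (X₁*X₂*X₃*X₄*X₅)
      + 3 * trace (X₁*X₂*X₃*X₅*X₄)
      - 3 * trace (X₁*X₂*X₅*X₃*X₄)
      - 3 * trace (X₁*X₅*X₂*X₃*X₄)
      - 3 * trace (X₂*X₁*X₃*X₄*X₅)
      + 3 * trace (X₂*X₁*X₃*X₅*X₄)
      - 3 * trace (X₂*X₁*X₅*X₃*X₄)
      - 3 * trace (X₂*X₅*X₁*X₃*X₄)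
      + 3 * trace (X₅*X₁*X₂*X₃*X₄)
      + 3 * trace (X₅*X₂*X₁*X₃*X₄) := by
  have h := congrArg (fun M => trace (M * (X₃*X₄))) (polarized_cayley_hamilton X₁ X₂ X₅)
  simp only [Matrix.sub_mul, Matrix.add_mul, Matrix.smul_mul, Matrix.trace_sub, Matrix.trace_add,
    Matrix.trace_smul, smul_eq_mul, Matrix.one_mul, Matrix.zero_mul, Matrix.trace_zero,
    ← Matrix.mul_assoc] at h
  have c (A : Matrix (Fin 3) (Fin 3) ℂ) : trace (A*X₅) = trace (X₅*A) := Matrix.trace_mul_comm _ _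
  have e1 := c (X₃*X₄)
  have e2 := c (X₁*X₃*X₄)
  have e3 := c (X₂*X₃*X₄)
  have e4 := c (X₁*X₂*X₃*X₄)
  have e5 := c (X₂*X₁*X₃*X₄)
  have e6 := c (X₁*X₂)
  have e7 : trace (X₁*X₅*X₂) = trace (X₅*X₂*X₁) := by
    rw [Matrix.mul_assoc, Matrix.trace_mul_comm]
  simp only [← Matrix.mul_assoc] at e1 e2 e3 e4 e5 e6
  rw [e6, e7] at h
  rw [e1, e2, e3, e4, e5]
  linear_combination 3 * h
end

section
/- For all 3×3 complex matrices X₁, X₂, X₃, X₄, X₅, X₆ the following trace identity holds: t(1,2,3,4,5,6) + t(1,2,3,5,4,6) + t(4,1,2,3,5,6) + t(4,5,1,2,3,6) + t(5,1,2,3,4,6) + t(5,4,1,2,3,6) = t(4)t(5)t(6)t(1,2,3) − t(6)t(4,5)t(1,2,3) − t(5)t(4,6)t(1,2,3) − t(4)t(5,6)t(1,2,3) + t(5,4,6)t(1,2,3) + t(5,6,4)t(1,2,3) − t(5)t(6)t(1,2,3,4) + t(5,6)t(1,2,3,4) − t(4)t(6)t(1,2,3,5) + t(4,6)t(1,2,3,5)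 − t(4)t(5)t(1,2,3,6) + t(4,5)t(1,2,3,6) + t(6)t(1,2,3,4,5) + t(5)t(1,2,3,4,6) + t(6)t(1,2,3,5,4) + t(4)t(1,2,3,5,6) + t(5)t(1,2,3,6,4) + t(4)t(1,2,3,6,5). -/
open Matrix

theorem polarized_CH (A B C : Matrix (Fin 3) (Fin 3) ℂ) :
    A*B*C + A*C*B + B*A*C + B*C*A + C*A*B + C*B*A
      - trace A • (B*C + C*B) - trace B • (A*C + C*A) - trace C • (A*B + B*A)
      + (trace A * trace B - trace (A*B)) • C
      + (trace A * trace C - trace (A*C)) • B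
      + (trace B * trace C - trace (B*C)) • A
      - (trace A * trace B * trace C - trace A * trace (B*C) - trace B * trace (A*C)
        - trace C * trace (A*B) + trace (A*B*C) + trace (B*A*C)) • (1 : Matrix (Fin 3) (Fin 3) ℂ)
      = 0 := by
  ext i j
  fin_cases i <;> fin_cases j <;>
  · simp [Matrix.mul_apply, Matrix.trace, Fin.sum_univ_three, Matrix.one_apply]
    ring

theorem fundamental_four (U A B C : Matrix (Fin 3) (Fin 3) ℂ) :
    trace (U*A*B*C) + trace (U*A*C*B) + trace (U*B*A*C) + trace (U*B*C*A)
      + trace (U*C*A*B) + trace (U*C*B*A)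
      - trace A * (trace (U*B*C) + trace (U*C*B)) - trace B * (trace (U*A*C) + trace (U*C*A))
      - trace C * (trace (U*A*B) + trace (U*B*A))
      + (trace A * trace B - trace (A*B)) * trace (U*C)
      + (trace A * trace C - trace (A*C)) * trace (U*B)
      + (trace B * trace C - trace (B*C)) * trace (U*A)
      - (trace A * trace B * trace C - trace A * trace (B*C) - trace B * trace (A*C)
        - trace C * trace (A*B) + trace (A*B*C) + trace (B*A*C)) * trace U = 0 := by
  have h := congrArg (fun M => trace (U * M)) (polarized_CH A B C)
  simpa only [Matrix.mul_add, Matrix.mul_sub, Matrix.mul_smul, trace_add, trace_sub, trace_smul,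
    smul_eq_mul, Matrix.mul_one, Matrix.mul_zero, trace_zero, ← Matrix.mul_assoc] using h

/-- A six-letter trace identity obtained from the fundamental relation with `U = X₁X₂X₃`. -/
theorem six_letter_trace_identity_one (X₁ X₂ X₃ X₄ X₅ X₆ : Matrix (Fin 3) (Fin 3) ℂ) :
    trace (X₁*X₂*X₃*X₄*X₅*X₆) + trace (X₁*X₂*X₃*X₅*X₄*X₆)
      + trace (X₄*X₁*X₂*X₃*X₅*X₆) + trace (X₄*X₅*X₁*X₂*X₃*X₆)
      + trace (X₅*X₁*X₂*X₃*X₄*X₆) + trace (X₅*X₄*X₁*X₂*X₃*X₆)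
    =
      trace X₄ * trace X₅ * trace X₆ * trace (X₁*X₂*X₃)
      - trace X₆ * trace (X₄*X₅) * trace (X₁*X₂*X₃)
      - trace X₅ * trace (X₄*X₆) * trace (X₁*X₂*X₃)
      - trace X₄ * trace (X₅*X₆) * trace (X₁*X₂*X₃)
      + trace (X₅*X₄*X₆) * trace (X₁*X₂*X₃)
      + trace (X₅*X₆*X₄) * trace (X₁*X₂*X₃)
      - trace X₅ * trace X₆ * trace (X₁*X₂*X₃*X₄)
      + trace (X₅*X₆) * trace (X₁*X₂*X₃*X₄)
      - trace X₄ * trace X₆ * trace (X₁*X₂*X₃*X₅)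
      + trace (X₄*X₆) * trace (X₁*X₂*X₃*X₅)
      - trace X₄ * trace X₅ * trace (X₁*X₂*X₃*X₆)
      + trace (X₄*X₅) * trace (X₁*X₂*X₃*X₆)
      + trace X₆ * trace (X₁*X₂*X₃*X₄*X₅)
      + trace X₅ * trace (X₁*X₂*X₃*X₄*X₆)
      + trace X₆ * trace (X₁*X₂*X₃*X₅*X₄)
      + trace X₄ * trace (X₁*X₂*X₃*X₅*X₆)
      + trace X₅ * trace (X₁*X₂*X₃*X₆*X₄)
      + trace X₄ * trace (X₁*X₂*X₃*X₆*X₅) := by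
  have h := fundamental_four (X₁*X₂*X₃) X₄ X₅ X₆
  have e1 : trace (X₄*X₁*X₂*X₃*X₅*X₆) = trace (X₁*X₂*X₃*X₅*X₆*X₄) := by
    rw [Matrix.trace_mul_comm (X₁*X₂*X₃*X₅*X₆) X₄]; simp only [Matrix.mul_assoc]
  have e2 : trace (X₄*X₅*X₁*X₂*X₃*X₆) = trace (X₁*X₂*X₃*X₆*X₄*X₅) := by
    rw [Matrix.mul_assoc (X₁*X₂*X₃*X₆) X₄, Matrix.trace_mul_comm (X₁*X₂*X₃*X₆)]
    simp only [Matrix.mul_assoc]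
  have e3 : trace (X₅*X₁*X₂*X₃*X₄*X₆) = trace (X₁*X₂*X₃*X₄*X₆*X₅) := by
    rw [Matrix.trace_mul_comm (X₁*X₂*X₃*X₄*X₆) X₅]; simp only [Matrix.mul_assoc]
  have e4 : trace (X₅*X₄*X₁*X₂*X₃*X₆) = trace (X₁*X₂*X₃*X₆*X₅*X₄) := by
    rw [Matrix.mul_assoc (X₁*X₂*X₃*X₆) X₅, Matrix.trace_mul_comm (X₁*X₂*X₃*X₆)]
    simp only [Matrix.mul_assoc]
  have e5 : trace (X₅*X₆*X₄) = trace (X₄*X₅*X₆) := by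
    rw [Matrix.trace_mul_comm (X₅*X₆) X₄, Matrix.mul_assoc]
  rw [e1, e2, e3, e4, e5]
  linear_combination h
end

section
/- For all 3×3 complex matrices X₁, X₂, X₃, X₄, X₅, X₆ the following trace identity holds: t(1,2,3,4,5,6) + t(1,4,5,2,3,6) + t(2,3,1,4,5,6) + t(2,3,4,5,1,6) + t(4,5,1,2,3,6) + t(4,5,2,3,1,6) = t(1)t(6)t(2,3)t(4,5) − t(1,6)t(2,3)t(4,5) − t(6)t(1,2,3)t(4,5) − (1/2)t(1)t(2,3,6)t(4,5) − (1/2)t(1)t(6,2,3)t(4,5) + t(1,2,3,6)t(4,5) + t(1,6,2,3)t(4,5) − t(6)t(2,3)t(1,4,5) + (1/2)t(1,4,5)t(2,3,6) + (1/2)t(1,4,5)t(6,2,3) − t(1)t(2,3)t(6,4,5) + t(1,2,3)t(6,4,5) + t(2,3)t(1,4,5,6) + t(2,3)t(1,6,4,5) − t(1)t(6)t(2,3,4,5) + t(1,6)t(2,3,4,5) + t(6)t(1,2,3,4,5) + t(6)t(1,4,5,2,3) + t(1)t(4,5,2,3,6) + t(1)t(4,5,6,2,3). -/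
open Matrix

set_option maxHeartbeats 4000000 in
theorem fund_trace_aux (U X Y Z : Matrix (Fin 3) (Fin 3) ℂ) :
    trace (U*X*Y*Z) + trace (U*Y*X*Z) + trace (X*U*Y*Z) + trace (X*Y*U*Z)
      + trace (Y*U*X*Z) + trace (Y*X*U*Z)
    = trace U * trace Z * trace X * trace Y
      - trace (U*Z) * trace X * trace Y - trace Z * trace (U*X) * trace Y
      - trace U * trace (X*Z) * trace Y + trace (U*X*Z) * trace Y
      + trace (U*Z*X) * trace Y - trace Z * trace X * trace (U*Y)
      + trace (U*Y) * trace (X*Z) - trace U * trace X * trace (Z*Y)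
      + trace (U*X) * trace (Z*Y) + trace X * trace (U*Y*Z)
      + trace X * trace (U*Z*Y) - trace U * trace Z * trace (X*Y)
      + trace (U*Z) * trace (X*Y) + trace Z * trace (U*X*Y)
      + trace Z * trace (U*Y*X) + trace U * trace (Y*X*Z)
      + trace U * trace (Y*Z*X) := by
  simp only [trace_fin_three, Matrix.mul_apply, Fin.sum_univ_three]
  ring

/-- A six-letter trace identity obtained from the fundamental relation with
`U = X₁`, `X = X₂X₃`, `Y = X₄X₅`, `Z = X₆`. -/
theorem six_letter_trace_identity_two (X₁ X₂ X₃ X₄ X₅ X₆ : Matrix (Fin 3) (Fin 3) ℂ) :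
    trace (X₁*X₂*X₃*X₄*X₅*X₆) + trace (X₁*X₄*X₅*X₂*X₃*X₆)
      + trace (X₂*X₃*X₁*X₄*X₅*X₆) + trace (X₂*X₃*X₄*X₅*X₁*X₆)
      + trace (X₄*X₅*X₁*X₂*X₃*X₆) + trace (X₄*X₅*X₂*X₃*X₁*X₆)
    =
      trace X₁ * trace X₆ * trace (X₂*X₃) * trace (X₄*X₅)
      - trace (X₁*X₆) * trace (X₂*X₃) * trace (X₄*X₅)
      - trace X₆ * trace (X₁*X₂*X₃) * trace (X₄*X₅)
      - (1/2) * trace X₁ * trace (X₂*X₃*X₆) * trace (X₄*X₅)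
      - (1/2) * trace X₁ * trace (X₆*X₂*X₃) * trace (X₄*X₅)
      + trace (X₁*X₂*X₃*X₆) * trace (X₄*X₅)
      + trace (X₁*X₆*X₂*X₃) * trace (X₄*X₅)
      - trace X₆ * trace (X₂*X₃) * trace (X₁*X₄*X₅)
      + (1/2) * trace (X₁*X₄*X₅) * trace (X₂*X₃*X₆)
      + (1/2) * trace (X₁*X₄*X₅) * trace (X₆*X₂*X₃)
      - trace X₁ * trace (X₂*X₃) * trace (X₆*X₄*X₅)
      + trace (X₁*X₂*X₃) * trace (X₆*X₄*X₅)
      + trace (X₂*X₃) * trace (X₁*X₄*X₅*X₆)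
      + trace (X₂*X₃) * trace (X₁*X₆*X₄*X₅)
      - trace X₁ * trace X₆ * trace (X₂*X₃*X₄*X₅)
      + trace (X₁*X₆) * trace (X₂*X₃*X₄*X₅)
      + trace X₆ * trace (X₁*X₂*X₃*X₄*X₅)
      + trace X₆ * trace (X₁*X₄*X₅*X₂*X₃)
      + trace X₁ * trace (X₄*X₅*X₂*X₃*X₆)
      + trace X₁ * trace (X₄*X₅*X₆*X₂*X₃) := by
  have h := fund_trace_aux X₁ (X₂*X₃) (X₄*X₅) X₆
  have e : trace (X₆*X₂*X₃) = trace (X₂*X₃*X₆) := by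
    rw [Matrix.mul_assoc, Matrix.trace_mul_comm]
  simp only [← Matrix.mul_assoc] at h
  rw [e]
  linear_combination h
end

section
/- For every n ≥ 1, the determinant of the generic n×n matrix, i.e., the polynomial det(𝐗) in the polynomial ring ℂ[x_{ij} : 1 ≤ i,j ≤ n] where 𝐗 is the matrix whose (i,j) entry is the indeterminate x_{ij}, is an irreducible polynomial. -/
open Matrix MvPolynomial

/-- scale the variables in `S` by `X` -/
noncomputable def gdScale {σ : Type} (S : σ → Prop) [DecidablePred S] :
    MvPolynomial σ ℂ →ₐ[ℂ] Polynomial (MvPolynomial σ ℂ) :=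
  MvPolynomial.aeval fun a => (if S a then Polynomial.X else 1) * Polynomial.C (X a)

lemma gd_free {σ : Type} (S : σ → Prop) [DecidablePred S] (f : MvPolynomial σ ℂ)
    (h : (gdScale S f).natDegree = 0) (a : σ) (ha : S a) : a ∉ f.vars := by
  classical
  have h1 : ∀ f : MvPolynomial σ ℂ, (gdScale S f).eval 1 = f := by
    intro f
    have : ((Polynomial.aeval (R := MvPolynomial σ ℂ) (1 : MvPolynomial σ ℂ)).restrictScalars ℂ).comp
        (gdScale S) = AlgHom.id ℂ _ := by
      apply MvPolynomial.algHom_ext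
      intro b
      by_cases hb : S b <;> simp [gdScale, hb]
    have := congrArg (fun F => F f) this
    simpa [Polynomial.coe_aeval_eq_eval] using this
  have h0 : (gdScale S f).eval 0 =
      MvPolynomial.bind₁ (fun b => if S b then (0 : MvPolynomial σ ℂ) else X b) f := by
    have : ((Polynomial.aeval (R := MvPolynomial σ ℂ) (0 : MvPolynomial σ ℂ)).restrictScalars ℂ).comp
        (gdScale S) = MvPolynomial.bind₁ (fun b => if S b then (0 : MvPolynomial σ ℂ) else X b) := by
      apply MvPolynomial.algHom_ext
      intro b
      by_cases hb : S b <;> simp [gdScale, hb]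
    have := congrArg (fun F => F f) this
    simpa [Polynomial.coe_aeval_eq_eval] using this
  have h2 := h1 f
  rw [Polynomial.eq_C_of_natDegree_eq_zero h] at h2 h0
  simp only [Polynomial.eval_C] at h2 h0
  rw [h2] at h0
  intro hm
  rw [h0] at hm
  obtain ⟨b, -, hb⟩ := MvPolynomial.mem_vars_bind₁ _ _ hm
  by_cases hS : S b
  · simp [hS] at hb
  · simp [hS] at hb
    exact hS (hb ▸ ha)

lemma gd_split {σ : Type} (S : σ → Prop) [DecidablePred S] (d f g : MvPolynomial σ ℂ)
    (hd : d ≠ 0) (hS : gdScale S d = Polynomial.X * Polynomial.C d) (h : d = f * g) :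
    (∀ a, S a → a ∉ f.vars) ∨ (∀ a, S a → a ∉ g.vars) := by
  have hne : gdScale S d ≠ 0 := by
    rw [hS]; simp [hd]
  have h1 : (gdScale S d).natDegree = 1 := by
    rw [hS, Polynomial.natDegree_X_mul (by simpa using hd), Polynomial.natDegree_C]
  rw [h, map_mul] at hne h1
  rw [Polynomial.natDegree_mul (left_ne_zero_of_mul hne) (right_ne_zero_of_mul hne)] at h1
  rcases Nat.eq_zero_or_pos (gdScale S f).natDegree with h0 | h0
  · exact Or.inl (gd_free S f h0)
  · exact Or.inr (gd_free S g (by omega))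

/-- the generic determinant -/
noncomputable def gdDet (n : ℕ) : MvPolynomial (Fin n × Fin n) ℂ :=
  Matrix.det (Matrix.of fun i j : Fin n => (MvPolynomial.X (i, j) : MvPolynomial (Fin n × Fin n) ℂ))

lemma gd_row (n : ℕ) (i : Fin n) :
    gdScale (fun a : Fin n × Fin n => a.1 = i) (gdDet n) = Polynomial.X * Polynomial.C (gdDet n) := by
  have := Matrix.det_mul_column (fun k => if k = i then Polynomial.X else 1)
    ((Polynomial.C : MvPolynomial (Fin n × Fin n) ℂ →+* _).mapMatrix
      (Matrix.of fun i j : Fin n => (MvPolynomial.X (i, j) : MvPolynomial (Fin n × Fin n) ℂ)))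
  rw [← RingHom.map_det] at this
  simp only [Finset.prod_ite_eq', Finset.mem_univ, if_true] at this
  rw [gdDet, ← this, AlgHom.map_det]
  congr 1
  ext1 k l
  simp [gdScale]

lemma gd_col (n : ℕ) (i : Fin n) :
    gdScale (fun a : Fin n × Fin n => a.2 = i) (gdDet n) = Polynomial.X * Polynomial.C (gdDet n) := by
  have := Matrix.det_mul_row (fun k => if k = i then Polynomial.X else 1)
    ((Polynomial.C : MvPolynomial (Fin n × Fin n) ℂ →+* _).mapMatrix
      (Matrix.of fun i j : Fin n => (MvPolynomial.X (i, j) : MvPolynomial (Fin n × Fin n) ℂ)))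
  rw [← RingHom.map_det] at this
  simp only [Finset.prod_ite_eq', Finset.mem_univ, if_true] at this
  rw [gdDet, ← this, AlgHom.map_det]
  congr 1
  ext1 k l
  simp [gdScale]

lemma gd_eval (n : ℕ) (M : Matrix (Fin n) (Fin n) ℂ) :
    MvPolynomial.eval (fun a => M a.1 a.2) (gdDet n) = M.det := by
  rw [gdDet, RingHom.map_det]
  congr 1
  ext1 k l
  simp

lemma gd_ne (n : ℕ) : gdDet n ≠ 0 := by
  intro h
  have := gd_eval n 1
  simp [h] at this

lemma gd_mem (n : ℕ) (i j : Fin n) : (i, j) ∈ (gdDet n).vars := by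
  by_contra hm
  set P : Matrix (Fin n) (Fin n) ℂ := (Equiv.swap i j).permMatrix ℂ with hP
  have e1 := gd_eval n P
  have e2 := gd_eval n (P.updateRow i 0)
  have e3 : (P.updateRow i 0).det = 0 := Matrix.det_eq_zero_of_row_eq_zero i (by simp)
  have e4 : P.det ≠ 0 := by
    rw [hP, Matrix.det_permutation]
    simp
  apply e4
  rw [← e1, ← e3, ← e2]
  apply MvPolynomial.eval₂Hom_congr' rfl _ rfl
  rintro ⟨k, l⟩ hk - 
  have hne : (k, l) ≠ (i, j) := fun h => hm (h ▸ hk)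
  by_cases hki : k = i
  · subst hki
    have : j ≠ l := fun h => hne (by rw [h])
    simp [hP, PEquiv.toMatrix_apply, Equiv.Perm.permMatrix, this]
  · simp [hki]

lemma gd_unit {σ : Type} (g : MvPolynomial σ ℂ) (hg : g ≠ 0) (h : ∀ a, a ∉ g.vars) : IsUnit g := by
  have hv : g.vars = ∅ := Finset.eq_empty_of_forall_notMem h
  obtain ⟨c, rfl⟩ : ∃ c, g = C c := by
    have : g ∈ MvPolynomial.supported ℂ (∅ : Set σ) := by
      rw [MvPolynomial.mem_supported, hv]; simp
    rw [MvPolynomial.supported_empty, Algebra.mem_bot] at this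
    obtain ⟨c, hc⟩ := this
    exact ⟨c, hc.symm⟩
  have : c ≠ 0 := by rintro rfl; simp at hg
  exact (IsUnit.mk0 c this).map C

lemma gd_aux (n : ℕ) (i : Fin n) (f g : MvPolynomial (Fin n × Fin n) ℂ) (h : gdDet n = f * g)
    (hg : ∀ a : Fin n × Fin n, a.1 = i → a ∉ g.vars) : IsUnit g := by
  classical
  have hne := gd_ne n
  rw [h] at hne
  apply gd_unit g (right_ne_zero_of_mul hne)
  rintro ⟨k, l⟩
  rcases gd_split (fun a : Fin n × Fin n => a.2 = l) _ f g (gd_ne n) (gd_col n l) h with h1 | h1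
  · exfalso
    have := gd_mem n i l
    rw [h] at this
    rcases Finset.mem_union.1 (MvPolynomial.vars_mul f g this) with h2 | h2
    · exact h1 _ rfl h2
    · exact hg _ rfl h2
  · exact h1 _ rfl

/-- The determinant of the generic `n×n` matrix is an irreducible polynomial. -/
theorem generic_det_irreducible (n : ℕ) (hn : 1 ≤ n) :
    Irreducible
      (Matrix.det
        (Matrix.of fun i j : Fin n => (MvPolynomial.X (i, j) : MvPolynomial (Fin n × Fin n) ℂ))) := by
  change Irreducible (gdDet n)
  let i : Fin n := ⟨0, hn⟩
  refine ⟨fun hu => ?_, fun f g h => ?_⟩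
  · obtain ⟨u, hu⟩ := hu.exists_right_inv
    have := congrArg (gdScale (fun a : Fin n × Fin n => a.1 = i)) hu
    rw [map_mul, gd_row, map_one] at this
    have := congrArg (Polynomial.eval 0) this
    simp at this
  · rcases gd_split (fun a : Fin n × Fin n => a.1 = i) _ f g (gd_ne n) (gd_row n i) h with h1 | h1
    · exact Or.inl (gd_aux n i g f (by rw [h, mul_comm]) h1)
    · exact Or.inr (gd_aux n i f g h h1)
end

section
/- The eight complex-valued functions on SL(3,ℂ) × SL(3,ℂ) given by (A,B) ↦ tr(A), (A,B) ↦ tr(B), (A,B) ↦ tr(AB), (A,B) ↦ tr(A⁻¹), (A,B) ↦ tr(B⁻¹), (A,B) ↦ tr(AB⁻¹), (A,B) ↦ tr(BA⁻¹), and (A,B) ↦ tr(A⁻¹B⁻¹) are algebraically independent over ℂ in the ring of all ℂ-valued functions on SL(3,ℂ) × SL(3,ℂ). -/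
open Matrix


open MvPolynomial in
lemma jac_chain {σ : Type*} [Fintype σ] (F : σ → MvPolynomial σ ℂ) (P : MvPolynomial σ ℂ) (j : σ) :
    pderiv j (aeval F P) = ∑ i, aeval F (pderiv i P) * pderiv j (F i) := by
  classical
  induction P using MvPolynomial.induction_on with
  | C a => simp [← MvPolynomial.algebraMap_eq]
  | add p q hp hq => simp only [map_add, hp, hq, add_mul, Finset.sum_add_distrib]
  | mul_X p k hp =>
    rw [map_mul, aeval_X, pderiv_mul, hp]
    simp only [pderiv_mul, pderiv_X, map_add, map_mul, aeval_X, add_mul, Finset.sum_add_distrib]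
    congr 1
    · rw [Finset.sum_mul]
      exact Finset.sum_congr rfl fun i _ => by ring
    · rw [Finset.sum_eq_single k]
      · simp
      · intro b _ hb
        simp [Pi.single_apply, Ne.symm hb]
      · simp

open MvPolynomial in
lemma jac_indep {σ : Type*} [Fintype σ] [DecidableEq σ] (F : σ → MvPolynomial σ ℂ)
    (hJ : (Matrix.of fun i j => pderiv j (F i)).det ≠ 0) (n : ℕ) :
    ∀ P : MvPolynomial σ ℂ, (∀ m : σ →₀ ℕ, n ≤ m.degree → coeff m P = 0) →
      aeval F P = 0 → P = 0 := by
  induction n with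
  | zero =>
    intro P h _
    ext m
    simpa using h m (Nat.zero_le _)
  | succ n ih =>
    intro P h hP
    have h0 : (fun i => aeval F (pderiv i P)) = 0 := by
      apply Matrix.eq_zero_of_vecMul_eq_zero hJ
      funext j
      have := jac_chain F P j
      rw [hP, map_zero] at this
      simpa [Matrix.vecMul, dotProduct] using this.symm
    have h1 : ∀ i, pderiv i P = 0 := by
      intro i
      apply ih _ _ (congrFun h0 i)
      intro m hm
      rw [coeff_pderiv, h, zero_mul]
      simp [hm]
    have h2 : P = C (coeff 0 P) := by
      ext m
      rw [coeff_C]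
      split_ifs with hm
      · rw [hm]
      · obtain ⟨i, hi⟩ : ∃ i, m i ≠ 0 := by
          by_contra! hc
          exact hm (by ext i; simp [hc i])
        have h3 : m = (m - Finsupp.single i 1) + Finsupp.single i 1 := by
          ext k
          by_cases hk : k = i
          · subst hk; simp; omega
          · simp [Finsupp.single_apply, Ne.symm hk]
        have h4 := congrArg (coeff (m - Finsupp.single i 1)) (h1 i)
        rw [coeff_pderiv, ← h3, coeff_zero] at h4
        rcases mul_eq_zero.1 h4 with h5 | h5
        · exact h5
        · exact absurd h5 (Nat.cast_add_one_ne_zero _)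
    rw [h2] at hP ⊢
    rw [aeval_C, algebraMap_eq] at hP
    exact hP

/-- first matrix -/
def matA (v : Fin 8 → ℂ) : Matrix (Fin 3) (Fin 3) ℂ := !![v 0, -v 1, 1; 1, 0, 0; 0, 1, 0]

/-- second matrix -/
def matB (v : Fin 8 → ℂ) : Matrix (Fin 3) (Fin 3) ℂ :=
  !![1, v 5, v 6; v 2, 1 + v 2 * v 5, v 7 + v 2 * v 6;
    v 3, v 4 + v 3 * v 5, 1 + v 4 * v 7 + v 3 * v 6]

lemma detA (v : Fin 8 → ℂ) : (matA v).det = 1 := by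
  simp [matA, Matrix.det_fin_three]

lemma detB (v : Fin 8 → ℂ) : (matB v).det = 1 := by
  simp [matB, Matrix.det_fin_three]; ring

lemma adjA (v : Fin 8 → ℂ) :
    (matA v).adjugate = !![0, 1, 0; 0, 0, 1; 1, -v 0, v 1] := by
  rw [matA, Matrix.adjugate_fin_three_of]
  ext i j
  fin_cases i <;> fin_cases j <;> simp

lemma adjB (v : Fin 8 → ℂ) :
    (matB v).adjugate =
      !![1 + v 5 * v 2 + (v 5 * v 7 - v 6) * (v 2 * v 4 - v 3),
          -v 5 - (v 5 * v 7 - v 6) * v 4, v 5 * v 7 - v 6;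
        -v 2 - v 7 * (v 2 * v 4 - v 3), 1 + v 7 * v 4, -v 7;
        v 2 * v 4 - v 3, -v 4, 1] := by
  rw [matB, Matrix.adjugate_fin_three_of]
  ext i j
  fin_cases i <;> fin_cases j <;> simp <;> ring

open MvPolynomial in
/-- the traces as polynomials -/
noncomputable def polF : Fin 8 → MvPolynomial (Fin 8) ℂ :=
  ![X 0,
    3 + X 4 * X 7 + X 3 * X 6 + X 2 * X 5,
    X 7 + X 5 + X 3 + X 0 + X 2 * X 6 - X 1 * X 2,
    X 1,
    3 + X 4 * X 7 + X 3 * X 6 + X 2 * X 5 - X 3 * X 5 * X 7 - X 2 * X 4 * X 6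
      + X 2 * X 4 * X 5 * X 7,
    - X 7 - X 5 - X 3 + X 0 + X 4 * X 6 + X 2 * X 4 + X 1 * X 2 - X 4 * X 5 * X 7
      - X 1 * X 3 * X 7 + X 0 * X 3 * X 6 + X 0 * X 2 * X 5 + X 1 * X 2 * X 4 * X 7
      - X 0 * X 3 * X 5 * X 7 - X 0 * X 2 * X 4 * X 6 + X 0 * X 2 * X 4 * X 5 * X 7,
    X 6 + X 4 + X 2 + X 1 + X 3 * X 5 - X 0 * X 7 + X 1 * X 4 * X 7 + X 1 * X 3 * X 6
      - X 0 * X 2 * X 6,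
    - X 6 - X 4 - X 2 + X 1 + X 5 * X 7 + X 3 * X 7 + X 0 * X 7 - X 2 * X 4 * X 7]

def jacM : Matrix (Fin 8) (Fin 8) ℤ :=
  !![1, 0, 0, 0, 0, 0, 0, 0;
    0, 0, 0, 1, 0, 0, -1, 1;
    1, 0, 1, 1, 0, 1, 0, 1;
    0, 1, 0, 0, 0, 0, 0, 0;
    0, 0, -1, 1, 0, 0, -1, 1;
    0, 0, 1, -1, 1, -1, 1, -1;
    0, 0, 1, 0, 1, -1, 1, 0;
    0, 1, -1, 0, -1, 0, -1, -1]

def jacK : Matrix (Fin 8) (Fin 8) ℤ :=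
  !![1, 0, 0, 0, 0, 0, 0, 0;
    0, 0, 0, 1, 0, 0, 0, 0;
    0, 1, 0, 0, -1, 0, 0, 0;
    -1, -1, 1, -1, 1, 0, 1, 1;
    -1, -1, 1, 0, 2, 2, -1, 0;
    -1, -1, 1, 0, 1, 1, -1, 0;
    0, -1, 0, 0, 0, -1, 1, 0;
    1, 1, -1, 1, -1, -1, 0, -1]

lemma jacMK : jacM * jacK = 1 := by decide +kernel

open MvPolynomial in
lemma polF_jac (i j : Fin 8) :
    eval (![0, 0, 0, -1, 1, 0, 1, 0] : Fin 8 → ℂ) (pderiv j (polF i)) = (jacM i j : ℂ) := by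
  have h3 : ∀ j : Fin 8, pderiv j (3 : MvPolynomial (Fin 8) ℂ) = 0 := fun j => by
    rw [← map_ofNat (C : ℂ →+* MvPolynomial (Fin 8) ℂ) 3, pderiv_C]
  fin_cases i <;> simp [polF, pderiv_mul, pderiv_X, h3] <;> fin_cases j <;>
    simp [jacM, Pi.single_apply]

open MvPolynomial in
lemma polF_det : (Matrix.of fun i j => pderiv j (polF i)).det ≠ 0 := by
  intro h
  have h1 := congrArg (eval (![0, 0, 0, -1, 1, 0, 1, 0] : Fin 8 → ℂ)) h
  rw [RingHom.map_det, map_zero] at h1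
  have h2 : (eval (![0, 0, 0, -1, 1, 0, 1, 0] : Fin 8 → ℂ)).mapMatrix
      (Matrix.of fun i j => pderiv j (polF i)) = (Int.castRingHom ℂ).mapMatrix jacM := by
    ext i j
    simpa using polF_jac i j
  rw [h2, ← RingHom.map_det] at h1
  have h3 : jacM.det = 0 := by simpa using h1
  have h4 := congrArg Matrix.det jacMK
  rw [Matrix.det_mul, h3] at h4
  simp at h4

/-- The eight trace functions `tr(A)`, `tr(B)`, `tr(AB)`, `tr(A⁻¹)`, `tr(B⁻¹)`,
`tr(AB⁻¹)`, `tr(BA⁻¹)`, `tr(A⁻¹B⁻¹)` on `SL(3,ℂ) × SL(3,ℂ)` are algebraically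
independent over `ℂ`. -/
theorem eight_traces_algebraically_independent :
    AlgebraicIndependent ℂ
      (![fun p : Matrix.SpecialLinearGroup (Fin 3) ℂ × Matrix.SpecialLinearGroup (Fin 3) ℂ =>
            Matrix.trace (p.1 : Matrix (Fin 3) (Fin 3) ℂ),
          fun p => Matrix.trace (p.2 : Matrix (Fin 3) (Fin 3) ℂ),
          fun p => Matrix.trace ((p.1 * p.2 : Matrix.SpecialLinearGroup (Fin 3) ℂ) :
            Matrix (Fin 3) (Fin 3) ℂ),
          fun p => Matrix.trace ((p.1⁻¹ : Matrix.SpecialLinearGroup (Fin 3) ℂ) :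
            Matrix (Fin 3) (Fin 3) ℂ),
          fun p => Matrix.trace ((p.2⁻¹ : Matrix.SpecialLinearGroup (Fin 3) ℂ) :
            Matrix (Fin 3) (Fin 3) ℂ),
          fun p => Matrix.trace ((p.1 * p.2⁻¹ : Matrix.SpecialLinearGroup (Fin 3) ℂ) :
            Matrix (Fin 3) (Fin 3) ℂ),
          fun p => Matrix.trace ((p.2 * p.1⁻¹ : Matrix.SpecialLinearGroup (Fin 3) ℂ) :
            Matrix (Fin 3) (Fin 3) ℂ),
          fun p => Matrix.trace ((p.1⁻¹ * p.2⁻¹ : Matrix.SpecialLinearGroup (Fin 3) ℂ) :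
            Matrix (Fin 3) (Fin 3) ℂ)] :
        Fin 8 →
          (Matrix.SpecialLinearGroup (Fin 3) ℂ × Matrix.SpecialLinearGroup (Fin 3) ℂ) → ℂ) := by
  rw [algebraicIndependent_iff]
  intro P hP
  refine jac_indep polF polF_det (P.totalDegree + 1) P ?_ ?_
  · intro m hm
    apply MvPolynomial.coeff_eq_zero_of_totalDegree_lt
    have : m.degree = ∑ i ∈ m.support, m i := rfl
    omega
  · apply MvPolynomial.funext
    intro v
    have h := congrFun hP (⟨matA v, detA v⟩, ⟨matB v, detB v⟩)
    rw [map_zero]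
    have e1 : ∀ (f : Fin 8 → (Matrix.SpecialLinearGroup (Fin 3) ℂ ×
        Matrix.SpecialLinearGroup (Fin 3) ℂ) → ℂ) p, MvPolynomial.aeval f P p
          = MvPolynomial.eval (fun i => f i p) P := by
      intro f p
      have := MvPolynomial.map_aeval f (Pi.evalRingHom _ p) P
      exact this
    rw [e1] at h
    have e2 : MvPolynomial.eval v (MvPolynomial.aeval polF P)
        = MvPolynomial.eval (fun i => MvPolynomial.eval v (polF i)) P := by
      have := MvPolynomial.map_aeval polF (MvPolynomial.eval v) P
      rw [this]
      congr 1
      ext <;> simp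
    rw [e2]
    refine Eq.trans ?_ h
    congr 2
    funext i
    fin_cases i <;>
      simp [polF, Matrix.SpecialLinearGroup.coe_inv, adjA, adjB] <;>
      (try simp [matA, matB, Matrix.trace_fin_three]) <;> (try ring)
end

section
/- There exist polynomials P and Q in eight variables with complex coefficients such that for all A, B ∈ SL(3,ℂ), the commutator trace c := tr(A·B·A⁻¹·B⁻¹) satisfies the monic degree-2 relation c² + P(v)·c + Q(v) = 0, where v = (tr(A), tr(B), tr(AB), tr(A⁻¹), tr(B⁻¹), tr(AB⁻¹), tr(BA⁻¹), tr(A⁻¹B⁻¹)). -/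
open Matrix

def pF {R : Type*} [CommRing R] (d s t w s1 t1 z z1 w1 : R) : R :=
    -3 * d + z * z1 + w * w1 - w * s1 * t1 + d * t * t1 - t * s1 * z - s * t1 * z1 + s * s1 - s
    * t * w1 + s * t * s1 * t1

def qF {R : Type*} [CommRing R] (d s t w s1 t1 z z1 w1 : R) : R :=
    9 * d ^ 2 + w1 ^ 3 + z1 ^ 3 - 6 * d * z * z1 + d * z ^ 3 + t1 * z1 ^ 2 * w1 - 3 * d * t1 *
    z * w1 + d ^ 2 * t1 ^ 3 - 3 * s1 * z1 * w1 + s1 * z ^ 2 * w1 - 2 * s1 * t1 * w1 ^ 2 + d *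
    s1 * t1 ^ 2 * z + s1 ^ 2 * t1 * z1 + s1 ^ 2 * t1 ^ 2 * w1 + s1 ^ 3 - 6 * d * w * w1 + w * z
    * z1 * w1 + d * w * t1 ^ 2 * z1 + 3 * d * w * s1 * t1 + w * s1 ^ 2 * z + d * w ^ 2 * t1 * z
    + w ^ 2 * s1 * z1 + d * w ^ 3 + t * z1 * w1 ^ 2 - 6 * d ^ 2 * t * t1 + d * t * t1 * z * z1
    - 2 * t * s1 * z1 ^ 2 + 3 * d * t * s1 * z - t * s1 * t1 * z1 * w1 + t * s1 ^ 2 * w1 - t *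
    s1 ^ 3 * t1 - 3 * d * t * w * z1 + d * t * w * z ^ 2 + d * t * w * t1 * w1 - d * t * w * s1
    * t1 ^ 2 + d * t ^ 2 * z * w1 - d * t ^ 2 * s1 * t1 * z + t ^ 2 * s1 ^ 2 * z1 + d * t ^ 2 *
    w * s1 + d ^ 2 * t ^ 3 + s * z * w1 ^ 2 + 3 * d * s * t1 * z1 - 2 * d * s * t1 * z ^ 2 + d
    * s * t1 ^ 2 * w1 - 6 * d * s * s1 + s * s1 * z * z1 - s * s1 * t1 * z * w1 - d * s * s1 *
    t1 ^ 3 + s * w * z1 ^ 2 - 3 * d * s * w * z + s * w * s1 * w1 - s * w * s1 ^ 2 * t1 + 3 * d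
    * s * t * w1 - d * s * t * t1 ^ 2 * z1 + d * s * t * s1 * t1 - s * t * s1 ^ 2 * z - d * s *
    t * w * t1 * z - s * t * w * s1 * z1 - 2 * d * s * t * w ^ 2 + d * s * t ^ 2 * z1 - d * s *
    t ^ 2 * t1 * w1 + d * s * t ^ 2 * s1 * t1 ^ 2 - d * s * t ^ 3 * s1 + s ^ 2 * z1 * w1 + d *
    s ^ 2 * t1 ^ 2 * z - s ^ 2 * s1 * t1 * z1 + d * s ^ 2 * w * t1 + d * s ^ 2 * t * z - s ^ 2
    * t * s1 * w1 + s ^ 2 * t * s1 ^ 2 * t1 + d * s ^ 2 * t ^ 2 * w + d * s ^ 3 - d * s ^ 3 * t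
    * t1

set_option maxHeartbeats 4000000 in
theorem coreId (a b c x1 x2 x3 y1 y2 y3 p q e : ℂ)
    (hS : q = 1 - x1 * x2 * x3 + x1 * (x2 * x3 - y1) + x2 * (x1 * x3 - y2)
      + x3 * (x1 * x2 - y3) - p)
    (hT : p * q = (x2 * x3 - y1) * (x1 * x3 - y2) * (x1 * x2 - y3))
    (he : e = a * b * c * (x1 * y1 + x2 * y2 + x3 * y3)
      + a * (a * c) * (p - x3 * (x1 * x2 - y3)) + b * (a * b) * (p - x1 * (x2 * x3 - y1))
      + c * (b * c) * (p - x2 * (x1 * x3 - y2))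
      + b * (b * c) * (q - x3 * (x1 * x2 - y3)) + c * (a * c) * (q - x1 * (x2 * x3 - y1))
      + a * (a * b) * (q - x2 * (x1 * x3 - y2))) :
    e ^ 2 - pF (a * b * c) (a + b + c) (x1 + x2 + x3) (a * x1 + b * x2 + c * x3)
        (b * c + a * c + a * b) (y1 + y2 + y3) (a * y1 + b * y2 + c * y3)
        (b * c * x1 + a * c * x2 + a * b * x3) (b * c * y1 + a * c * y2 + a * b * y3) * e
      + qF (a * b * c) (a + b + c) (x1 + x2 + x3) (a * x1 + b * x2 + c * x3)
        (b * c + a * c + a * b) (y1 + y2 + y3) (a * y1 + b * y2 + c * y3)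
        (b * c * x1 + a * c * x2 + a * b * x3) (b * c * y1 + a * c * y2 + a * b * y3) = 0 := by
  subst he hS
  unfold pF qF
  linear_combination (-(a * (a * c) + b * (a * b) + c * (b * c)
    - b * (b * c) - c * (a * c) - a * (a * b)) ^ 2) * hT

/-- The homogenised relation, as a polynomial function of the entries. -/
def relF {R : Type*} [CommRing R] (A B : Matrix (Fin 3) (Fin 3) R) : R :=
  (A * B * A.adjugate * B.adjugate).trace ^ 2
    - pF A.det A.trace B.trace (A * B).trace A.adjugate.trace B.adjugate.trace
        (A * B.adjugate).trace (B * A.adjugate).trace (A.adjugate * B.adjugate).trace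
      * (A * B * A.adjugate * B.adjugate).trace
    + qF A.det A.trace B.trace (A * B).trace A.adjugate.trace B.adjugate.trace
        (A * B.adjugate).trace (B * A.adjugate).trace (A.adjugate * B.adjugate).trace

/-- The discriminant of the characteristic polynomial. -/
def discF {R : Type*} [CommRing R] (A : Matrix (Fin 3) (Fin 3) R) : R :=
  A.trace ^ 2 * A.adjugate.trace ^ 2 - 4 * A.adjugate.trace ^ 3 - 4 * A.trace ^ 3 * A.det
    + 18 * A.trace * A.adjugate.trace * A.det - 27 * A.det ^ 2

theorem trace_mapMatrix {R S : Type*} [CommRing R] [CommRing S] (f : R →+* S)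
    (A : Matrix (Fin 3) (Fin 3) R) : (f.mapMatrix A).trace = f A.trace := by
  simp [Matrix.trace]

theorem relF_map {R S : Type*} [CommRing R] [CommRing S] (f : R →+* S)
    (A B : Matrix (Fin 3) (Fin 3) R) : relF (f.mapMatrix A) (f.mapMatrix B) = f (relF A B) := by
  unfold relF pF qF
  simp only [← RingHom.map_adjugate, ← RingHom.map_det, ← map_mul, trace_mapMatrix]
  simp only [map_add, map_sub, map_mul, map_pow, map_neg, map_ofNat]

theorem discF_map {R S : Type*} [CommRing R] [CommRing S] (f : R →+* S)
    (A : Matrix (Fin 3) (Fin 3) R) : discF (f.mapMatrix A) = f (discF A) := by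
  unfold discF
  simp only [← RingHom.map_adjugate, ← RingHom.map_det, trace_mapMatrix]
  simp only [map_add, map_sub, map_mul, map_pow, map_ofNat]

theorem adj_conj (U V A : Matrix (Fin 3) (Fin 3) ℂ) (h : U * V = 1) :
    (U * A * V).adjugate = U * A.adjugate * V := by
  have h' : V * U = 1 := mul_eq_one_comm.mp h
  have hd : U.det * V.det = 1 := by rw [← det_mul, h, det_one]
  have hU : U.adjugate = U.det • V := by
    calc U.adjugate = V * (U * U.adjugate) := by rw [← mul_assoc, h', one_mul]
      _ = U.det • V := by rw [mul_adjugate]; simp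
  have hV : V.adjugate = V.det • U := by
    calc V.adjugate = U * (V * V.adjugate) := by rw [← mul_assoc, h, one_mul]
      _ = V.det • U := by rw [mul_adjugate]; simp
  rw [adjugate_mul_distrib, adjugate_mul_distrib, hU, hV]
  simp only [smul_mul_assoc, mul_smul_comm, smul_smul]
  rw [hd, one_smul, mul_assoc]

theorem relF_conj (U V A B : Matrix (Fin 3) (Fin 3) ℂ) (h : U * V = 1) :
    relF (U * A * V) (U * B * V) = relF A B := by
  have h' : V * U = 1 := mul_eq_one_comm.mp h
  have hm : ∀ X Y : Matrix (Fin 3) (Fin 3) ℂ, U * X * V * (U * Y * V) = U * (X * Y) * V := by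
    intro X Y
    calc U * X * V * (U * Y * V) = U * X * (V * U) * (Y * V) := by noncomm_ring
      _ = _ := by rw [h']; noncomm_ring
  have ht : ∀ X : Matrix (Fin 3) (Fin 3) ℂ, (U * X * V).trace = X.trace := by
    intro X
    rw [trace_mul_comm, ← mul_assoc, h', one_mul]
  have hd : (U * A * V).det = A.det := by
    have : U.det * V.det = 1 := by rw [← det_mul, h, det_one]
    rw [det_mul, det_mul]
    linear_combination A.det * this
  unfold relF
  simp only [adj_conj _ _ _ h, hm, ht, hd]

set_option maxHeartbeats 4000000 in
theorem relF_diag (v : Fin 3 → ℂ) (B : Matrix (Fin 3) (Fin 3) ℂ) (hB : B.det = 1) :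
    relF (diagonal v) B = 0 := by
  rw [det_fin_three] at hB
  have key := coreId (v 0) (v 1) (v 2) (B 0 0) (B 1 1) (B 2 2)
    (B 1 1 * B 2 2 - B 1 2 * B 2 1) (B 0 0 * B 2 2 - B 0 2 * B 2 0)
    (B 0 0 * B 1 1 - B 0 1 * B 1 0) (B 0 1 * B 1 2 * B 2 0) (B 0 2 * B 2 1 * B 1 0)
    (diagonal v * B * (diagonal v).adjugate * B.adjugate).trace
    (by linear_combination hB) (by ring)
    (by
      simp [adjugate_fin_three, trace_fin_three, mul_apply, Fin.sum_univ_three, diagonal]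
      ring)
  have e1 : (diagonal v).det = v 0 * v 1 * v 2 := by
    simp [det_diagonal, Fin.prod_univ_three]
  have e2 : (diagonal v).trace = v 0 + v 1 + v 2 := by
    simp [Fin.sum_univ_three]
  have e3 : B.trace = B 0 0 + B 1 1 + B 2 2 := trace_fin_three B
  have e4 : (diagonal v * B).trace = v 0 * B 0 0 + v 1 * B 1 1 + v 2 * B 2 2 := by
    simp [trace_fin_three]
  have e5 : (diagonal v).adjugate.trace = v 1 * v 2 + v 0 * v 2 + v 0 * v 1 := by
    simp [adjugate_fin_three, trace_fin_three, diagonal]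
  have e6 : B.adjugate.trace = (B 1 1 * B 2 2 - B 1 2 * B 2 1)
      + (B 0 0 * B 2 2 - B 0 2 * B 2 0) + (B 0 0 * B 1 1 - B 0 1 * B 1 0) := by
    simp [adjugate_fin_three, trace_fin_three]
  have e7 : (diagonal v * B.adjugate).trace = v 0 * (B 1 1 * B 2 2 - B 1 2 * B 2 1)
      + v 1 * (B 0 0 * B 2 2 - B 0 2 * B 2 0) + v 2 * (B 0 0 * B 1 1 - B 0 1 * B 1 0) := by
    simp [adjugate_fin_three, trace_fin_three]
  have e8 : (B * (diagonal v).adjugate).trace = v 1 * v 2 * B 0 0 + v 0 * v 2 * B 1 1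
      + v 0 * v 1 * B 2 2 := by
    simp [adjugate_fin_three, trace_fin_three, mul_apply, Fin.sum_univ_three, diagonal]
    ring
  have e9 : ((diagonal v).adjugate * B.adjugate).trace =
      v 1 * v 2 * (B 1 1 * B 2 2 - B 1 2 * B 2 1)
      + v 0 * v 2 * (B 0 0 * B 2 2 - B 0 2 * B 2 0)
      + v 0 * v 1 * (B 0 0 * B 1 1 - B 0 1 * B 1 0) := by
    simp [adjugate_fin_three, trace_fin_three, mul_apply, Fin.sum_univ_three, diagonal]
  unfold relF
  rw [e1, e2, e3, e4, e5, e6, e7, e8, e9]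
  exact key

theorem exists_diag (A : Matrix (Fin 3) (Fin 3) ℂ) (h : discF A ≠ 0) :
    ∃ (U V : Matrix (Fin 3) (Fin 3) ℂ) (v : Fin 3 → ℂ), U * V = 1 ∧ A = U * diagonal v * V := by
  let P : Cubic ℂ := ⟨1, -A.trace, A.adjugate.trace, -A.det⟩
  have ha : P.a ≠ 0 := one_ne_zero
  obtain ⟨x, y, z, h3⟩ := (Cubic.splits_iff_roots_eq_three (φ := RingHom.id ℂ) ha).mp
    (IsAlgClosed.splits _)
  have hb := Cubic.b_eq_three_roots ha h3
  have hc := Cubic.c_eq_three_roots ha h3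
  have hd := Cubic.d_eq_three_roots ha h3
  simp only [P, RingHom.id_apply, one_mul] at hb hc hd
  have hs : A.trace = x + y + z := by linear_combination -hb
  have hu : A.adjugate.trace = x * y + x * z + y * z := hc
  have hdet : A.det = x * y * z := by linear_combination -hd
  have hdisc : discF A = ((x - y) * (x - z) * (y - z)) ^ 2 := by
    unfold discF; rw [hs, hu, hdet]; ring
  have hne : (x - y) * (x - z) * (y - z) ≠ 0 := by
    intro h0; apply h; rw [hdisc, h0]; ring
  have hxy : x ≠ y := by rintro rfl; simp at hne
  have hxz : x ≠ z := by rintro rfl; simp at hne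
  have hyz : y ≠ z := by rintro rfl; simp at hne
  have hchar : ∀ r : ℂ, (r • (1 : Matrix (Fin 3) (Fin 3) ℂ) - A).det
      = (r - x) * (r - y) * (r - z) := by
    intro r
    have : (r • (1 : Matrix (Fin 3) (Fin 3) ℂ) - A).det
        = r ^ 3 - A.trace * r ^ 2 + A.adjugate.trace * r - A.det := by
      simp [det_fin_three, adjugate_fin_three, trace_fin_three]
      ring
    rw [this, hs, hu, hdet]; ring
  let v : Fin 3 → ℂ := ![x, y, z]
  have hv : Function.Injective v := by
    intro i j hij
    fin_cases i <;> fin_cases j <;> simp_all [v]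
  have hev : ∀ i, ∃ w : Fin 3 → ℂ, w ≠ 0 ∧ A *ᵥ w = v i • w := by
    intro i
    have h0 : (v i • (1 : Matrix (Fin 3) (Fin 3) ℂ) - A).det = 0 := by
      rw [hchar]; fin_cases i <;> simp [v]
    obtain ⟨w, hw, hw'⟩ := exists_mulVec_eq_zero_iff.mpr h0
    refine ⟨w, hw, ?_⟩
    rw [sub_mulVec, smul_mulVec, one_mulVec, sub_eq_zero] at hw'
    exact hw'.symm
  choose w hw hw' using hev
  have hli : LinearIndependent ℂ w := by
    apply Module.End.eigenvectors_linearIndependent' (Matrix.toLin' A) v hv w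
    intro i
    rw [Module.End.hasEigenvector_iff, Module.End.mem_eigenspace_iff]
    exact ⟨by rw [toLin'_apply]; exact hw' i, hw i⟩
  let U : Matrix (Fin 3) (Fin 3) ℂ := (Matrix.of w)ᵀ
  have hU : IsUnit U := by
    rw [← Matrix.linearIndependent_cols_iff_isUnit]
    exact hli
  have hUdet : IsUnit U.det := (Matrix.isUnit_iff_isUnit_det U).mp hU
  have hAU : A * U = U * diagonal v := by
    ext i j
    rw [mul_diagonal]
    have := congrFun (hw' j) i
    simpa [U, mul_apply, mulVec, dotProduct, mul_comm] using this
  refine ⟨U, U⁻¹, v, mul_nonsing_inv U hUdet, ?_⟩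
  rw [← hAU, mul_assoc, mul_nonsing_inv U hUdet, mul_one]

theorem relF_of_disc (A B : Matrix (Fin 3) (Fin 3) ℂ) (h : discF A ≠ 0) (hB : B.det = 1) :
    relF A B = 0 := by
  obtain ⟨U, V, v, hUV, rfl⟩ := exists_diag A h
  have hVU : V * U = 1 := mul_eq_one_comm.mp hUV
  have hB' : B = U * (V * B * U) * V := by
    calc B = (U * V) * B * (U * V) := by rw [hUV]; simp
      _ = _ := by noncomm_ring
  rw [hB', relF_conj _ _ _ _ hUV]
  apply relF_diag
  have hd : V.det * U.det = 1 := by rw [← det_mul, hVU, det_one]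
  rw [det_mul, det_mul, hB]
  linear_combination hd

open Polynomial in
theorem relF_zero (A B : Matrix (Fin 3) (Fin 3) ℂ) (hB : B.det = 1) : relF A B = 0 := by
  let D : Matrix (Fin 3) (Fin 3) ℂ := diagonal ![0, 1, 2]
  let M : Matrix (Fin 3) (Fin 3) ℂ[X] :=
    (C : ℂ →+* ℂ[X]).mapMatrix A + (X : ℂ[X]) • (C : ℂ →+* ℂ[X]).mapMatrix (D - A)
  let N : Matrix (Fin 3) (Fin 3) ℂ[X] := (C : ℂ →+* ℂ[X]).mapMatrix B
  have hM : ∀ t : ℂ, (evalRingHom t).mapMatrix M = A + t • (D - A) := by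
    intro t; ext i j; simp [M]
  have hN : ∀ t : ℂ, (evalRingHom t).mapMatrix N = B := by
    intro t; ext i j; simp [N]
  have hdisc : discF M ≠ 0 := by
    intro h0
    have h1 := discF_map (evalRingHom 1) M
    rw [h0, hM, map_zero, one_smul, add_sub_cancel] at h1
    simp [discF, D, adjugate_fin_three, trace_fin_three, det_fin_three, diagonal] at h1
    norm_num at h1
  have hprod : discF M * relF M N = 0 := by
    apply Polynomial.funext
    intro t
    rw [eval_mul, eval_zero]
    have h1 := discF_map (evalRingHom t) M
    have h2 := relF_map (evalRingHom t) M N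
    simp only [coe_evalRingHom] at h1 h2
    rw [← h1, ← h2, hN]
    by_cases h : discF ((evalRingHom t).mapMatrix M) = 0
    · rw [h, zero_mul]
    · rw [relF_of_disc _ _ h hB, mul_zero]
  have hrel : relF M N = 0 := (mul_eq_zero.mp hprod).resolve_left hdisc
  have h2 := relF_map (evalRingHom 0) M N
  rw [hrel, hM, hN, map_zero, zero_smul, add_zero] at h2
  exact h2

/-- The commutator trace `tr(ABA⁻¹B⁻¹)` on `SL(3,ℂ) × SL(3,ℂ)` satisfies a monic degree-2
relation over the eight trace coordinates `tr(A), tr(B), tr(AB), tr(A⁻¹), tr(B⁻¹),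
tr(AB⁻¹), tr(BA⁻¹), tr(A⁻¹B⁻¹)`. -/
theorem commutator_trace_monic_relation :
    ∃ P Q : MvPolynomial (Fin 8) ℂ,
      ∀ A B : Matrix.SpecialLinearGroup (Fin 3) ℂ,
        (Matrix.trace ((A * B * A⁻¹ * B⁻¹ : Matrix.SpecialLinearGroup (Fin 3) ℂ) :
              Matrix (Fin 3) (Fin 3) ℂ)) ^ 2
          + MvPolynomial.eval
              (![Matrix.trace (A : Matrix (Fin 3) (Fin 3) ℂ),
                 Matrix.trace (B : Matrix (Fin 3) (Fin 3) ℂ),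
                 Matrix.trace ((A * B : Matrix.SpecialLinearGroup (Fin 3) ℂ) :
                   Matrix (Fin 3) (Fin 3) ℂ),
                 Matrix.trace ((A⁻¹ : Matrix.SpecialLinearGroup (Fin 3) ℂ) :
                   Matrix (Fin 3) (Fin 3) ℂ),
                 Matrix.trace ((B⁻¹ : Matrix.SpecialLinearGroup (Fin 3) ℂ) :
                   Matrix (Fin 3) (Fin 3) ℂ),
                 Matrix.trace ((A * B⁻¹ : Matrix.SpecialLinearGroup (Fin 3) ℂ) :
                   Matrix (Fin 3) (Fin 3) ℂ),
                 Matrix.trace ((B * A⁻¹ : Matrix.SpecialLinearGroup (Fin 3) ℂ) :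
                   Matrix (Fin 3) (Fin 3) ℂ),
                 Matrix.trace ((A⁻¹ * B⁻¹ : Matrix.SpecialLinearGroup (Fin 3) ℂ) :
                   Matrix (Fin 3) (Fin 3) ℂ)]) P
            * Matrix.trace ((A * B * A⁻¹ * B⁻¹ : Matrix.SpecialLinearGroup (Fin 3) ℂ) :
                Matrix (Fin 3) (Fin 3) ℂ)
          + MvPolynomial.eval
              (![Matrix.trace (A : Matrix (Fin 3) (Fin 3) ℂ),
                 Matrix.trace (B : Matrix (Fin 3) (Fin 3) ℂ),
                 Matrix.trace ((A * B : Matrix.SpecialLinearGroup (Fin 3) ℂ) :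
                   Matrix (Fin 3) (Fin 3) ℂ),
                 Matrix.trace ((A⁻¹ : Matrix.SpecialLinearGroup (Fin 3) ℂ) :
                   Matrix (Fin 3) (Fin 3) ℂ),
                 Matrix.trace ((B⁻¹ : Matrix.SpecialLinearGroup (Fin 3) ℂ) :
                   Matrix (Fin 3) (Fin 3) ℂ),
                 Matrix.trace ((A * B⁻¹ : Matrix.SpecialLinearGroup (Fin 3) ℂ) :
                   Matrix (Fin 3) (Fin 3) ℂ),
                 Matrix.trace ((B * A⁻¹ : Matrix.SpecialLinearGroup (Fin 3) ℂ) :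
                   Matrix (Fin 3) (Fin 3) ℂ),
                 Matrix.trace ((A⁻¹ * B⁻¹ : Matrix.SpecialLinearGroup (Fin 3) ℂ) :
                   Matrix (Fin 3) (Fin 3) ℂ)]) Q
          = 0 := by
  open MvPolynomial in
  refine ⟨-pF 1 (X 0) (X 1) (X 2) (X 3) (X 4) (X 5) (X 6) (X 7),
    qF 1 (X 0) (X 1) (X 2) (X 3) (X 4) (X 5) (X 6) (X 7), fun A B => ?_⟩
  have h := relF_zero (A : Matrix (Fin 3) (Fin 3) ℂ) (B : Matrix (Fin 3) (Fin 3) ℂ) B.det_coe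
  unfold relF at h
  rw [A.det_coe] at h
  have hp : ∀ f : Fin 8 → ℂ, MvPolynomial.eval f (pF 1 (MvPolynomial.X 0) (MvPolynomial.X 1)
      (MvPolynomial.X 2) (MvPolynomial.X 3) (MvPolynomial.X 4) (MvPolynomial.X 5)
      (MvPolynomial.X 6) (MvPolynomial.X 7)) =
      pF 1 (f 0) (f 1) (f 2) (f 3) (f 4) (f 5) (f 6) (f 7) := by
    intro f
    unfold pF
    simp only [map_add, map_sub, map_mul, map_pow, map_neg, map_ofNat, map_one,
      MvPolynomial.eval_X]
  have hq : ∀ f : Fin 8 → ℂ, MvPolynomial.eval f (qF 1 (MvPolynomial.X 0) (MvPolynomial.X 1)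
      (MvPolynomial.X 2) (MvPolynomial.X 3) (MvPolynomial.X 4) (MvPolynomial.X 5)
      (MvPolynomial.X 6) (MvPolynomial.X 7)) =
      qF 1 (f 0) (f 1) (f 2) (f 3) (f 4) (f 5) (f 6) (f 7) := by
    intro f
    unfold qF
    simp only [map_add, map_sub, map_mul, map_pow, map_neg, map_ofNat, map_one,
      MvPolynomial.eval_X]
  rw [map_neg, hp, hq]
  rw [neg_mul, ← sub_eq_add_neg]
  exact h
end
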